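/- Let ξ, μ, ν ∈ 𝓜 with ξ(A) ≤ μ(A) for all Borel A ⊆ ℝ and μ ≤_pcd ν, and let S_μ be a shadow of μ in ν. Then: (i) ξ ≤_pcd ν; (ii) ξ ≤_pcd S_μ; (iii) if S' is a shadow of ξ in S_μ and S'' is a shadow of ξ in ν, then S' = S''; and (iv) every shadow S'' of ξ in ν satisfies S''(A) ≤ S_μ(A) for all Borel A. -/

import Mathlib

open MeasureTheory Set Filter

noncomputable section

/-- `η ∈ 𝓜`: a finite Borel measure on ℝ with finite first moment. -/
def MemM (η : MeasureTheory.Measure ℝ) : Prop :=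
  MeasureTheory.IsFiniteMeasure η ∧ MeasureTheory.Integrable (fun x : ℝ => x) η

/-- Convex-decreasing order `≤_cd`. -/
def LeCD (η χ : MeasureTheory.Measure ℝ) : Prop :=
  ∀ f : ℝ → ℝ, ConvexOn ℝ Set.univ f → Antitone f →
    MeasureTheory.Integrable f η → MeasureTheory.Integrable f χ →
    ∫ x, f x ∂η ≤ ∫ x, f x ∂χ

/-- Positive convex-decreasing order `≤_pcd`. -/
def LePCD (η χ : MeasureTheory.Measure ℝ) : Prop :=
  ∀ f : ℝ → ℝ, (∀ x, 0 ≤ f x) → ConvexOn ℝ Set.univ f → Antitone f →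
    MeasureTheory.Integrable f η → MeasureTheory.Integrable f χ →
    ∫ x, f x ∂η ≤ ∫ x, f x ∂χ

/-- Positive convex order `≤_pc`. -/
def LePC (η χ : MeasureTheory.Measure ℝ) : Prop :=
  ∀ f : ℝ → ℝ, (∀ x, 0 ≤ f x) → ConvexOn ℝ Set.univ f →
    MeasureTheory.Integrable f η → MeasureTheory.Integrable f χ →
    ∫ x, f x ∂η ≤ ∫ x, f x ∂χ

/-- A supermartingale coupling of `η` and `χ`. -/
def IsSupermartingaleCoupling (η χ : MeasureTheory.Measure ℝ)
    (π : MeasureTheory.Measure (ℝ × ℝ)) : Prop :=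
  MeasureTheory.IsProbabilityMeasure π ∧
  π.map Prod.fst = η ∧ π.map Prod.snd = χ ∧
  MeasureTheory.Integrable (fun p : ℝ × ℝ => p.2) π ∧
  ∀ B : Set ℝ, MeasurableSet B →
    ∫ p in B ×ˢ (Set.univ : Set ℝ), (p : ℝ × ℝ).2 ∂π ≤ ∫ x in B, x ∂η

/-- The potential function `P_η(k) = ∫ (k-x)⁺ η(dx)`. -/
def Ppot (η : MeasureTheory.Measure ℝ) (k : ℝ) : ℝ := ∫ x, max (k - x) 0 ∂η

/-- The potential function `C_η(k) = ∫ (x-k)⁺ η(dx)`. -/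
def Cpot (η : MeasureTheory.Measure ℝ) (k : ℝ) : ℝ := ∫ x, max (x - k) 0 ∂η

/-- The left-continuous quantile function `G_η(u) = sup {k | η((-∞,k]) < u}`. -/
def quantile (η : MeasureTheory.Measure ℝ) (u : ℝ) : ℝ :=
  sSup {k : ℝ | (η (Set.Iic k)).toReal < u}

/-- The lift `μ_u = μ|_{(-∞,G(u))} + (u - μ((-∞,G(u)))) δ_{G(u)}`, with `μ_0 = 0`, `μ_1 = μ`. -/
def muU (μ : MeasureTheory.Measure ℝ) (u : ℝ) : MeasureTheory.Measure ℝ :=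
  if u ≤ 0 then 0
  else if 1 ≤ u then μ
  else μ.restrict (Set.Iio (quantile μ u)) +
    (ENNReal.ofReal (u - (μ (Set.Iio (quantile μ u))).toReal)) •
      MeasureTheory.Measure.dirac (quantile μ u)

/-- `S` is a shadow of `μ` in `ν`. -/
def IsShadow (μ ν S : MeasureTheory.Measure ℝ) : Prop :=
  MemM S ∧ LeCD μ S ∧ (∀ A : Set ℝ, MeasurableSet A → S A ≤ ν A) ∧
  ∀ η : MeasureTheory.Measure ℝ, MemM η → LeCD μ η →
    (∀ A : Set ℝ, MeasurableSet A → η A ≤ ν A) → LeCD S η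

/-- `h` is the convex hull of `f`. -/
def IsConvexHullFn (f h : ℝ → ℝ) : Prop :=
  ConvexOn ℝ Set.univ h ∧ (∀ x, h x ≤ f x) ∧
  ∀ g : ℝ → ℝ, ConvexOn ℝ Set.univ g → (∀ x, g x ≤ f x) → ∀ x, g x ≤ h x

/-- The class `𝒟(a,b)`. -/
def MemD (a b : ℝ) (f : ℝ → ℝ) : Prop :=
  (∀ x, 0 ≤ f x) ∧ Monotone f ∧ ConvexOn ℝ Set.univ f ∧
  Filter.Tendsto f Filter.atBot (nhds 0) ∧
  Filter.Tendsto (fun z => f z - (a * z - b)) Filter.atTop (nhds 0)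

/-- The topological support of a measure. -/
def msupport (η : MeasureTheory.Measure ℝ) : Set ℝ :=
  {x : ℝ | ∀ U ∈ nhds x, η U ≠ 0}

/-!
The potential `P_η(k) = ∫ (k - x)⁺ η(dx)` determines `η ∈ 𝓜`; on `𝓜` the order `≤_pcd` is the
pointwise order of potentials, and `η ≤ χ` holds iff `P_χ - P_η` is convex. In these terms the
shadow `S` of `μ` in `ν` is given by `P_ν - P_S = (P_ν - P_μ)ᶜ`, where `ᶜ` denotes the convex hull.

If `F` is continuous and `G` is convex then `(F + G)ᶜ - Fᶜ` is convex: where `Fᶜ < F` the function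
`Fᶜ` is locally affine, and where `Fᶜ = F` the difference touches its convex minorant `G`. With
`F = P_ν - P_μ` and `G = P_μ - P_ξ` this makes `P_{S_μ} - P_{S''}` convex, that is `S'' ≤ S_μ`.
Being the least competitor in `ν` and itself a competitor in `S_μ`, the measure `S''` is then the
shadow of `ξ` in `S_μ`.
-/

open scoped ENNReal Topology

section Chord

/-- The affine function agreeing with `f` at `a` and `b`. -/
def chord (f : ℝ → ℝ) (a b t : ℝ) : ℝ := f a + (f b - f a) / (b - a) * (t - a)

variable {f : ℝ → ℝ} {a b t : ℝ}

lemma convexOn_mul_add_const (m c : ℝ) : ConvexOn ℝ univ fun x : ℝ => m * x + c :=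
  ((LinearMap.mulLeft ℝ m).convexOn convex_univ).add_const c

lemma convexOn_chord (f : ℝ → ℝ) (a b : ℝ) : ConvexOn ℝ univ (chord f a b) := by
  convert convexOn_mul_add_const ((f b - f a) / (b - a)) (f a - (f b - f a) / (b - a) * a) using 2
  rw [chord]
  ring

lemma chord_convexCombination (hab : a ≠ b) {p q : ℝ} (hpq : p + q = 1) :
    chord f a b (p * a + q * b) = p * f a + q * f b := by
  have hne : b - a ≠ 0 := sub_ne_zero.mpr hab.symm
  obtain rfl : p = 1 - q := by linarith
  rw [chord]
  field_simp
  ring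

lemma chord_left (f : ℝ → ℝ) (a b : ℝ) : chord f a b a = f a := by simp [chord]

lemma chord_right (hab : a ≠ b) : chord f a b b = f b := by
  simpa using chord_convexCombination (f := f) hab (zero_add 1)

lemma chord_sub_add_chord_add (f : ℝ → ℝ) (a b t ε : ℝ) :
    chord f a b (t - ε) + chord f a b (t + ε) = 2 * chord f a b t := by
  simp only [chord]
  ring

lemma chord_le_of_notMem_Ioo (hf : ConvexOn ℝ univ f) (hab : a < b) (ht : t ∉ Ioo a b) :
    chord f a b t ≤ f t := by
  have hab' : 0 < b - a := sub_pos.mpr hab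
  rcases lt_trichotomy t a with hta | rfl | hat
  · have hslope := hf.slope_mono_adjacent (mem_univ t) (mem_univ b) hta hab
    rw [div_le_iff₀ (sub_pos.mpr hta)] at hslope
    rw [chord]
    linarith
  · exact (chord_left f t b).le
  rcases (not_lt.mp fun htb => ht ⟨hat, htb⟩ : b ≤ t).eq_or_lt with rfl | hbt
  · exact (chord_right hab.ne).le
  · have hslope := hf.slope_mono_adjacent (mem_univ a) (mem_univ t) hab hbt
    rw [le_div_iff₀ (sub_pos.mpr hbt)] at hslope
    have hb : (f b - f a) / (b - a) * (b - a) = f b - f a := div_mul_cancel₀ _ hab'.ne'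
    rw [chord]
    linarith

end Chord

section LocalConvexity

variable {φ : ℝ → ℝ}

lemma two_mul_le_add_of_convexOn (hφ : ConvexOn ℝ univ φ) (y ε : ℝ) :
    2 * φ y ≤ φ (y - ε) + φ (y + ε) := by
  have hconv := hφ.2 (mem_univ (y - ε)) (mem_univ (y + ε)) (by norm_num : (0 : ℝ) ≤ 1 / 2)
    (by norm_num : (0 : ℝ) ≤ 1 / 2) (by norm_num)
  simp only [smul_eq_mul] at hconv
  rw [show 1 / 2 * (y - ε) + 1 / 2 * (y + ε) = y by ring] at hconv
  linarith

lemma nonpos_on_Icc_of_frequently_midpoint_le {a b : ℝ} (hφ : Continuous φ)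
    (hmid : ∀ y, ∃ᶠ ε in 𝓝[>] (0 : ℝ), 2 * φ y ≤ φ (y - ε) + φ (y + ε))
    (ha : φ a ≤ 0) (hb : φ b ≤ 0) : ∀ y ∈ Icc a b, φ y ≤ 0 := by
  by_contra! ⟨y₀, hy₀, hpos⟩
  obtain ⟨y₁, hy₁, hmax⟩ := isCompact_Icc.exists_isMaxOn ⟨y₀, hy₀⟩ hφ.continuousOn
  obtain ⟨y, ⟨hy, hφy : φ y = φ y₁⟩, hleast⟩ :=
    (isCompact_Icc.inter_right (isClosed_singleton.preimage hφ)).exists_isLeast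
      (⟨y₁, hy₁, rfl⟩ : (Icc a b ∩ φ ⁻¹' {φ y₁}).Nonempty)
  have hypos : 0 < φ y := hφy ▸ hpos.trans_le (hmax hy₀)
  have hay : a < y := hy.1.lt_of_ne (by rintro rfl; linarith)
  have hyb : y < b := hy.2.lt_of_ne (by rintro rfl; linarith)
  obtain ⟨ε, hε, hε0, hεm⟩ := ((hmid y).and_eventually
    (Ioo_mem_nhdsGT (lt_min (sub_pos.mpr hay) (sub_pos.mpr hyb)))).exists
  obtain ⟨hεa, hεb⟩ := lt_min_iff.mp hεm
  -- `y` is the leftmost maximizer, so the midpoint inequality fails there.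
  have hleft : φ (y - ε) < φ y := by
    have hmem : y - ε ∈ Icc a b := ⟨by linarith, by linarith⟩
    refine hφy ▸ (hmax hmem).lt_of_ne fun heq => ?_
    linarith [hleast ⟨hmem, heq⟩]
  have hright : φ (y + ε) ≤ φ y := hφy ▸ hmax ⟨by linarith, by linarith⟩
  linarith

lemma convexOn_univ_of_frequently_midpoint_le (hφ : Continuous φ)
    (hmid : ∀ y, ∃ᶠ ε in 𝓝[>] (0 : ℝ), 2 * φ y ≤ φ (y - ε) + φ (y + ε)) :
    ConvexOn ℝ univ φ := by
  refine LinearOrder.convexOn_of_lt convex_univ fun x _ z _ hxz p q hp hq hpq => ?_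
  have hsub : ∀ y ∈ Icc x z, φ y - chord φ x z y ≤ 0 := by
    refine nonpos_on_Icc_of_frequently_midpoint_le
      (hφ.sub (convexOn_chord φ x z).locallyLipschitz.continuous)
      (fun y => (hmid y).mono fun ε hε => ?_) ?_ ?_
    · linarith [chord_sub_add_chord_add φ x z y ε]
    · rw [chord_left, sub_self]
    · rw [chord_right hxz.ne, sub_self]
  have hmem : p * x + q * z ∈ Icc x z :=
    convex_Icc x z (left_mem_Icc.mpr hxz.le) (right_mem_Icc.mpr hxz.le) hp.le hq.le hpq
  simpa [chord_convexCombination hxz.ne hpq] using hsub _ hmem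

end LocalConvexity

namespace IsConvexHullFn

variable {F G h h' : ℝ → ℝ}

lemma self (hF : ConvexOn ℝ univ F) : IsConvexHullFn F F :=
  ⟨hF, fun _ => le_rfl, fun _ _ hg => hg⟩

lemma exists_of_convexOn_le {g : ℝ → ℝ} (hg : ConvexOn ℝ univ g) (hgF : ∀ x, g x ≤ F x) :
    ∃ h, IsConvexHullFn F h := by
  let Minorant := {g : ℝ → ℝ // ConvexOn ℝ univ g ∧ ∀ x, g x ≤ F x}
  have : Nonempty Minorant := ⟨⟨g, hg, hgF⟩⟩
  have hbdd (x : ℝ) : BddAbove (range fun g : Minorant => g.1 x) :=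
    ⟨F x, forall_mem_range.mpr fun g => g.2.2 x⟩
  refine ⟨fun x => ⨆ g : Minorant, g.1 x, ⟨convex_univ, fun x _ y _ a b ha hb hab => ?_⟩,
    fun x => ciSup_le fun g => g.2.2 x, fun g hg hgF x => le_ciSup (hbdd x) ⟨g, hg, hgF⟩⟩
  refine ciSup_le fun g => (g.2.1.2 (mem_univ x) (mem_univ y) ha hb hab).trans ?_
  simp only [smul_eq_mul]
  gcongr
  · exact le_ciSup (hbdd x) g
  · exact le_ciSup (hbdd y) g

-- Where `h < F`, short chords of `h` stay below `F`, hence below `h` by maximality.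
lemma eventually_add_le_two_mul (hh : IsConvexHullFn F h) {y : ℝ} (hF : ContinuousAt F y)
    (hy : h y < F y) : ∀ᶠ ε in 𝓝[>] (0 : ℝ), h (y - ε) + h (y + ε) ≤ 2 * h y := by
  obtain ⟨c, hhc, hcF⟩ := exists_between hy
  have hsep : ∀ᶠ t in 𝓝 y, h t < c ∧ c < F t :=
    (hh.1.locallyLipschitz.continuous.continuousAt.eventually_lt_const hhc).and
      (hF.eventually_const_lt hcF)
  obtain ⟨δ, hδ, hball⟩ := Metric.eventually_nhds_iff.mp hsep
  filter_upwards [Ioo_mem_nhdsGT hδ] with ε ⟨hε0, hεδ⟩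
  have hsepε : ∀ t ∈ Icc (y - ε) (y + ε), h t < c ∧ c < F t := fun t ht =>
    hball (by rw [Real.dist_eq, abs_sub_lt_iff]; constructor <;> linarith [ht.1, ht.2])
  have hlt : y - ε < y + ε := by linarith
  have hconv := convexOn_chord h (y - ε) (y + ε)
  have hchord : ∀ t, chord h (y - ε) (y + ε) t ≤ F t := by
    intro t
    by_cases ht : t ∈ Ioo (y - ε) (y + ε)
    · have ht' := Ioo_subset_Icc_self ht
      refine ((hconv.le_max_of_mem_Icc (mem_univ _) (mem_univ _) ht').trans
        (max_le ?_ ?_)).trans (hsepε t ht').2.le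
      · rw [chord_left]
        exact (hsepε _ (left_mem_Icc.mpr hlt.le)).1.le
      · rw [chord_right hlt.ne]
        exact (hsepε _ (right_mem_Icc.mpr hlt.le)).1.le
    · exact (chord_le_of_notMem_Ioo hh.1 hlt ht).trans (hh.2.1 t)
  have hy_le := hh.2.2 _ hconv hchord y
  have hmid := chord_sub_add_chord_add h (y - ε) (y + ε) y ε
  rw [chord_left, chord_right hlt.ne] at hmid
  linarith

lemma convexOn_sub (hF : Continuous F) (hG : ConvexOn ℝ univ G) (hh : IsConvexHullFn F h)
    (hh' : IsConvexHullFn (fun x => F x + G x) h') :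
    ConvexOn ℝ univ fun x => h' x - h x := by
  have hGle : ∀ x, h x + G x ≤ h' x :=
    hh'.2.2 _ (hh.1.add hG) fun x => by linarith [hh.2.1 x]
  refine convexOn_univ_of_frequently_midpoint_le
    (hh'.1.locallyLipschitz.continuous.sub hh.1.locallyLipschitz.continuous)
    fun y => Eventually.frequently ?_
  rcases (hh.2.1 y).lt_or_eq with hlt | heq
  · filter_upwards [hh.eventually_add_le_two_mul hF.continuousAt hlt] with ε hε
    linarith [two_mul_le_add_of_convexOn hh'.1 y ε]
  · -- `h' - h ≥ G`, with equality at the contact point `y`.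
    refine Eventually.of_forall fun ε => ?_
    linarith [two_mul_le_add_of_convexOn hG y ε, hGle (y - ε), hGle (y + ε), hh'.2.1 y]

end IsConvexHullFn

section LowerPotential

/-- The potential `P_η(k) = ∫ (k - x)⁺ η(dx)` as an extended nonnegative number. Unlike `Ppot` it is
meaningful for infinite measures, such as the second derivative of a convex function. -/
def lPpot (η : Measure ℝ) (k : ℝ) : ℝ≥0∞ := ∫⁻ x, ENNReal.ofReal (k - x) ∂η

lemma lPpot_add (η χ : Measure ℝ) (k : ℝ) : lPpot (η + χ) k = lPpot η k + lPpot χ k :=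
  lintegral_add_measure _ _ _

lemma measure_Iic_mul_volume_le (η : Measure ℝ) (k l : ℝ) :
    η (Iic k) * volume (Ico k l) ≤ ∫⁻ t in Ico k l, η (Iic t) := by
  rw [← setLIntegral_const]
  exact setLIntegral_mono' measurableSet_Ico fun t ht => measure_mono (Iic_subset_Iic.mpr ht.1)

lemma tendsto_measure_Iic_nhdsGT {α : Type*} [LinearOrder α] [DenselyOrdered α]
    [TopologicalSpace α] [OrderTopology α] [FirstCountableTopology α] [MeasurableSpace α]
    [OpensMeasurableSpace α] (η : Measure α) {k : α} (hfin : ∃ l > k, η (Iic l) ≠ ∞) :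
    Tendsto (fun l => η (Iic l)) (𝓝[>] k) (𝓝 (η (Iic k))) := by
  have hInter : ⋂ l > k, Iic l = Iic k := by
    ext x
    simp only [mem_iInter, mem_Iic]
    exact forall_gt_imp_ge_iff_le_of_dense
  rw [← hInter]
  exact tendsto_measure_biInter_gt (fun l _ => measurableSet_Iic.nullMeasurableSet)
    (fun i j _ hij => Iic_subset_Iic.mpr hij) hfin

variable {η χ : Measure ℝ} [SFinite η] [SFinite χ] {k l : ℝ}

lemma lPpot_eq_setLIntegral_measure_Iic (η : Measure ℝ) [SFinite η] (k : ℝ) :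
    lPpot η k = ∫⁻ t in Iio k, η (Iic t) := by
  have hsection (x : ℝ) : ENNReal.ofReal (k - x) = ∫⁻ t in Iio k, (Iic t).indicator 1 x := by
    have hindicator : (fun t : ℝ => (Iic t).indicator (1 : ℝ → ℝ≥0∞) x) = (Ici x).indicator 1 :=
      rfl
    rw [hindicator, lintegral_indicator_one measurableSet_Ici,
      Measure.restrict_apply measurableSet_Ici, Ici_inter_Iio, Real.volume_Ico]
  have hmeas : Measurable fun p : ℝ × ℝ => (Iic p.2).indicator (1 : ℝ → ℝ≥0∞) p.1 :=
    measurable_one.indicator (measurableSet_le measurable_fst measurable_snd)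
  simp_rw [lPpot, hsection]
  rw [lintegral_lintegral_swap hmeas.aemeasurable]
  simp_rw [lintegral_indicator_one measurableSet_Iic]

lemma lPpot_eq_add_setLIntegral_Ico (η : Measure ℝ) [SFinite η] (hkl : k ≤ l) :
    lPpot η l = lPpot η k + ∫⁻ t in Ico k l, η (Iic t) := by
  have hdisj : Disjoint (Iio k) (Ico k l) := disjoint_left.mpr fun t ht ht' => ht'.1.not_gt ht
  rw [lPpot_eq_setLIntegral_measure_Iic, lPpot_eq_setLIntegral_measure_Iic,
    ← Iio_union_Ico_eq_Iio hkl, lintegral_union measurableSet_Ico hdisj]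

lemma measure_Iic_ne_top_of_lPpot_ne_top (hfin : ∀ k, lPpot η k ≠ ∞) (k : ℝ) : η (Iic k) ≠ ∞ := by
  refine ne_top_of_le_ne_top (hfin (k + 1)) ?_
  rw [lPpot_eq_add_setLIntegral_Ico η (le_add_of_nonneg_right zero_le_one)]
  refine le_add_left (le_trans ?_ (measure_Iic_mul_volume_le η k (k + 1)))
  simp

lemma measure_Iic_le_of_lPpot_eq (hfin : ∀ k, lPpot χ k ≠ ∞) (h : ∀ k, lPpot η k = lPpot χ k)
    (k : ℝ) : η (Iic k) ≤ χ (Iic k) := by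
  have hlt : ∀ l > k, η (Iic k) ≤ χ (Iic l) := fun l hkl => by
    have hIco : ∫⁻ t in Ico k l, η (Iic t) = ∫⁻ t in Ico k l, χ (Iic t) := by
      have hl := h l
      rwa [lPpot_eq_add_setLIntegral_Ico η hkl.le, lPpot_eq_add_setLIntegral_Ico χ hkl.le, h k,
        ENNReal.add_right_inj (hfin k)] at hl
    have hvol : volume (Ico k l) ≠ 0 := by simpa using hkl
    refine (ENNReal.mul_le_mul_iff_left hvol (by simp)).mp ?_
    calc η (Iic k) * volume (Ico k l)
        ≤ ∫⁻ t in Ico k l, χ (Iic t) := hIco ▸ measure_Iic_mul_volume_le η k l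
      _ ≤ χ (Iic l) * volume (Ico k l) := by
        rw [← setLIntegral_const]
        exact setLIntegral_mono' measurableSet_Ico fun t ht =>
          measure_mono (Iic_subset_Iic.mpr ht.2.le)
  exact ge_of_tendsto (tendsto_measure_Iic_nhdsGT χ
    ⟨k + 1, lt_add_one k, measure_Iic_ne_top_of_lPpot_ne_top hfin _⟩)
    (eventually_nhdsWithin_of_forall hlt)

lemma ext_of_lPpot {η χ : Measure ℝ} [SFinite η] [IsFiniteMeasure χ]
    (hfin : ∀ k, lPpot χ k ≠ ∞) (h : ∀ k, lPpot η k = lPpot χ k) : η = χ :=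
  (Measure.ext_of_Iic χ η fun k =>
    (measure_Iic_le_of_lPpot_eq (fun k => h k ▸ hfin k) (fun k => (h k).symm) k).antisymm
      (measure_Iic_le_of_lPpot_eq hfin h k)).symm

end LowerPotential

section SecondDerivative

variable {Φ : ℝ → ℝ}

lemma monotone_of_convexOn_of_tendsto_atBot {c : ℝ} (hΦ : ConvexOn ℝ univ Φ)
    (hlim : Tendsto Φ atBot (𝓝 c)) : Monotone Φ := by
  refine monotone_iff_forall_lt.mpr fun x y hxy => ?_
  have hslope : Tendsto (fun z => (Φ x - Φ z) / (x - z)) atBot (𝓝 0) :=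
    (hlim.const_sub (Φ x)).div_atTop (tendsto_atTop_add_const_left _ x tendsto_neg_atBot_atTop)
  have hnonneg : 0 ≤ (Φ y - Φ x) / (y - x) := by
    refine le_of_tendsto hslope ?_
    filter_upwards [eventually_lt_atBot x] with z hz
    exact hΦ.slope_mono_adjacent (mem_univ z) (mem_univ y) hz hxy
  rw [le_div_iff₀ (sub_pos.mpr hxy)] at hnonneg
  linarith

/-- The right derivative of `Φ`. -/
def rightDeriv (Φ : ℝ → ℝ) (x : ℝ) : ℝ := derivWithin Φ (Ioi x) x

lemma monotone_rightDeriv (hΦ : ConvexOn ℝ univ Φ) : Monotone (rightDeriv Φ) :=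
  monotoneOn_univ.mp (interior_univ (X := ℝ) ▸ hΦ.monotoneOn_rightDeriv)

lemma rightDeriv_nonneg (hΦ : Monotone Φ) (x : ℝ) : 0 ≤ rightDeriv Φ x :=
  (hΦ.monotoneOn _).derivWithin_nonneg

lemma tendsto_rightDeriv_atBot (hΦ : ConvexOn ℝ univ Φ) {c : ℝ} (hlim : Tendsto Φ atBot (𝓝 c)) :
    Tendsto (rightDeriv Φ) atBot (𝓝 0) := by
  refine tendsto_of_tendsto_of_tendsto_of_le_of_le tendsto_const_nhds
    (h := fun x => Φ (x + 1) - Φ x) ?_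
    (rightDeriv_nonneg (monotone_of_convexOn_of_tendsto_atBot hΦ hlim)) fun x => ?_
  · simpa using (hlim.comp (tendsto_atBot_add_const_right _ 1 tendsto_id)).sub hlim
  · simpa [slope_def_field, rightDeriv] using
      hΦ.rightDeriv_le_slope_of_mem_interior (x := x) (y := x + 1) (by simp) (by simp) (by simp)

lemma setLIntegral_Ioc_rightDeriv (hΦ : ConvexOn ℝ univ Φ) (hmono : Monotone Φ) {a k : ℝ}
    (hak : a ≤ k) :
    ∫⁻ t in Ioc a k, ENNReal.ofReal (rightDeriv Φ t) = ENNReal.ofReal (Φ k - Φ a) := by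
  have hint : IntervalIntegrable (rightDeriv Φ) volume a k :=
    (monotone_rightDeriv hΦ).intervalIntegrable
  rw [← intervalIntegral.integral_eq_sub_of_hasDeriv_right_of_le hak
      hΦ.locallyLipschitz.continuous.continuousOn
      (fun x _ => hΦ.hasDerivWithinAt_rightDeriv_of_mem_interior (by simp)) hint,
    intervalIntegral.integral_of_le hak]
  exact (ofReal_integral_eq_lintegral_ofReal hint.1 (ae_of_all _ (rightDeriv_nonneg hmono))).symm

lemma setLIntegral_Iio_rightDeriv (hΦ : ConvexOn ℝ univ Φ) (hlim : Tendsto Φ atBot (𝓝 0)) (k : ℝ) :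
    ∫⁻ t in Iio k, ENNReal.ofReal (rightDeriv Φ t) = ENNReal.ofReal (Φ k) := by
  have hcover : AECover (volume.restrict (Iic k)) atBot (fun a : ℝ => Ioi a) :=
    (aecover_Ioi tendsto_id).restrict
  rw [setLIntegral_congr Iio_ae_eq_Iic]
  refine hcover.lintegral_eq_of_tendsto _
    (monotone_rightDeriv hΦ).measurable.ennreal_ofReal.aemeasurable ?_
  have hΦk : Tendsto (fun a => ENNReal.ofReal (Φ k - Φ a)) atBot (𝓝 (ENNReal.ofReal (Φ k))) :=
    ENNReal.tendsto_ofReal (by simpa using hlim.const_sub (Φ k))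
  refine hΦk.congr' ?_
  filter_upwards [eventually_le_atBot k] with a hak
  rw [Measure.restrict_restrict measurableSet_Ioi, Ioi_inter_Iic, setLIntegral_Ioc_rightDeriv hΦ
    (monotone_of_convexOn_of_tendsto_atBot hΦ hlim) hak]

lemma exists_measure_Iic_ae_eq_of_monotone {g : ℝ → ℝ} (hg : Monotone g)
    (hlim : Tendsto g atBot (𝓝 0)) :
    ∃ τ : Measure ℝ, SFinite τ ∧ ∀ᵐ t, τ (Iic t) = ENNReal.ofReal (g t) := by
  have hright (x : ℝ) : hg.stieltjesFunction x = Function.rightLim g x :=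
    hg.stieltjesFunction_eq x
  have hslim : Tendsto hg.stieltjesFunction atBot (𝓝 0) := by
    refine tendsto_of_tendsto_of_tendsto_of_le_of_le hlim
      (hlim.comp (tendsto_atBot_add_const_right _ 1 tendsto_id)) (fun x => ?_) fun x => ?_
    · exact hright x ▸ hg.le_rightLim le_rfl
    · exact hright x ▸ hg.rightLim_le (lt_add_one x)
  refine ⟨hg.stieltjesFunction.measure, inferInstance, ?_⟩
  filter_upwards [hg.countable_not_continuousAt.ae_notMem volume] with t ht
  rw [hg.stieltjesFunction.measure_Iic hslim, sub_zero, hright,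
    (not_not.mp ht).continuousWithinAt.rightLim_eq]

lemma exists_lPpot_eq (hΦ : ConvexOn ℝ univ Φ) (hlim : Tendsto Φ atBot (𝓝 0)) :
    ∃ τ : Measure ℝ, SFinite τ ∧ ∀ k, lPpot τ k = ENNReal.ofReal (Φ k) := by
  obtain ⟨τ, hτ, hIic⟩ := exists_measure_Iic_ae_eq_of_monotone (monotone_rightDeriv hΦ)
    (tendsto_rightDeriv_atBot hΦ hlim)
  refine ⟨τ, hτ, fun k => ?_⟩
  rw [lPpot_eq_setLIntegral_measure_Iic, ← setLIntegral_Iio_rightDeriv hΦ hlim]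
  exact lintegral_congr_ae (ae_restrict_of_ae hIic)

end SecondDerivative

section Potential

lemma convexOn_put (x : ℝ) : ConvexOn ℝ univ fun k : ℝ => max (k - x) 0 :=
  ((convexOn_id convex_univ).sub (concaveOn_const x convex_univ)).sup
    (convexOn_const 0 convex_univ)

lemma convexOn_put_strike (k : ℝ) : ConvexOn ℝ univ fun x : ℝ => max (k - x) 0 :=
  ((convexOn_const k convex_univ).sub (concaveOn_id convex_univ)).sup
    (convexOn_const 0 convex_univ)

lemma antitone_put_strike (k : ℝ) : Antitone fun x : ℝ => max (k - x) 0 := fun _ _ hxy =>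
  max_le_max_right 0 (sub_le_sub_left hxy k)

lemma Ppot_eq_toReal_lPpot (η : Measure ℝ) (k : ℝ) : Ppot η k = (lPpot η k).toReal := by
  rw [Ppot, lPpot, integral_eq_lintegral_of_nonneg_ae (ae_of_all _ fun x => le_max_right (k - x) 0)
    (by fun_prop)]
  simp only [ENNReal.ofReal_max, ENNReal.ofReal_zero, zero_le, sup_of_le_left]

variable {η χ : Measure ℝ} {k : ℝ}

namespace MemM

lemma of_le (hχ : MemM χ) (h : η ≤ χ) : MemM η := by
  have := hχ.1
  exact ⟨isFiniteMeasure_of_le χ h, hχ.2.mono_measure h⟩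

lemma integrable_put (hη : MemM η) (k : ℝ) : Integrable (fun x => max (k - x) 0) η := by
  have := hη.1
  exact ((integrable_const k).sub hη.2).pos_part

lemma lPpot_ne_top (hη : MemM η) (k : ℝ) : lPpot η k ≠ ∞ := by
  refine ne_of_lt ?_
  simpa [lPpot, ENNReal.ofReal_max] using
    (hasFiniteIntegral_iff_ofReal (ae_of_all _ fun _ => le_max_right _ _)).mp
      (hη.integrable_put k).hasFiniteIntegral

lemma ofReal_Ppot (hη : MemM η) (k : ℝ) : ENNReal.ofReal (Ppot η k) = lPpot η k := by
  rw [Ppot_eq_toReal_lPpot, ENNReal.ofReal_toReal (hη.lPpot_ne_top k)]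

lemma ext_of_Ppot (hη : MemM η) (hχ : MemM χ) (h : ∀ k, Ppot η k = Ppot χ k) : η = χ := by
  have := hη.1
  have := hχ.1
  exact ext_of_lPpot hχ.lPpot_ne_top fun k => by rw [← hη.ofReal_Ppot, ← hχ.ofReal_Ppot, h]

lemma convexOn_Ppot (hη : MemM η) : ConvexOn ℝ univ (Ppot η) := by
  refine ⟨convex_univ, fun k _ l _ a b ha hb hab => ?_⟩
  have hk := (hη.integrable_put k).const_mul a
  have hl := (hη.integrable_put l).const_mul b
  calc Ppot η (a • k + b • l)
      ≤ ∫ x, (a * max (k - x) 0 + b * max (l - x) 0) ∂η :=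
        integral_mono (hη.integrable_put _) (hk.add hl)
          fun x => (convexOn_put x).2 (mem_univ k) (mem_univ l) ha hb hab
    _ = a • Ppot η k + b • Ppot η l := by
        rw [integral_add hk hl, integral_const_mul, integral_const_mul]
        rfl

lemma continuous_Ppot (hη : MemM η) : Continuous (Ppot η) :=
  hη.convexOn_Ppot.locallyLipschitz.continuous

lemma tendsto_Ppot_atBot (hη : MemM η) : Tendsto (Ppot η) atBot (𝓝 0) := by
  rw [← integral_zero ℝ ℝ (μ := η)]
  refine tendsto_integral_filter_of_dominated_convergence (fun x => max (0 - x) 0)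
    (Eventually.of_forall fun k => (hη.integrable_put k).aestronglyMeasurable) ?_
    (hη.integrable_put 0) (ae_of_all _ fun x => ?_)
  · filter_upwards [eventually_le_atBot 0] with k hk
    refine ae_of_all _ fun x => ?_
    rw [Real.norm_of_nonneg (le_max_right _ _)]
    gcongr
  · refine tendsto_const_nhds.congr' ?_
    filter_upwards [eventually_le_atBot x] with k hk
    rw [max_eq_right (sub_nonpos.mpr hk)]

lemma Ppot_add (hη : MemM η) (hχ : MemM χ) (k : ℝ) : Ppot (η + χ) k = Ppot η k + Ppot χ k :=
  integral_add_measure (hη.integrable_put k) (hχ.integrable_put k)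

lemma Ppot_mono (hχ : MemM χ) (h : η ≤ χ) (k : ℝ) : Ppot η k ≤ Ppot χ k :=
  integral_mono_measure h (ae_of_all _ fun _ => le_max_right _ _) (hχ.integrable_put k)

lemma exists_le_Ppot_eq (hχ : MemM χ) {Φ : ℝ → ℝ} (hΦ : ConvexOn ℝ univ Φ)
    (hΨ : ConvexOn ℝ univ fun k => Ppot χ k - Φ k) (hlim : Tendsto Φ atBot (𝓝 0)) :
    ∃ η ≤ χ, ∀ k, Ppot η k = Φ k := by
  have hΨlim : Tendsto (fun k => Ppot χ k - Φ k) atBot (𝓝 0) := by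
    simpa using hχ.tendsto_Ppot_atBot.sub hlim
  have hΦ0 := (monotone_of_convexOn_of_tendsto_atBot hΦ hlim).le_of_tendsto hlim
  have hΨ0 := (monotone_of_convexOn_of_tendsto_atBot hΨ hΨlim).le_of_tendsto hΨlim
  obtain ⟨η, hη, hηΦ⟩ := exists_lPpot_eq hΦ hlim
  obtain ⟨θ, hθ, hθΨ⟩ := exists_lPpot_eq hΨ hΨlim
  have hsum : η + θ = χ := by
    have := hχ.1
    refine ext_of_lPpot hχ.lPpot_ne_top fun k => ?_
    rw [lPpot_add, hηΦ, hθΨ, ← ENNReal.ofReal_add (hΦ0 k) (hΨ0 k), add_sub_cancel,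
      hχ.ofReal_Ppot]
  refine ⟨η, hsum ▸ Measure.le_add_right le_rfl, fun k => ?_⟩
  rw [Ppot_eq_toReal_lPpot, hηΦ, ENNReal.toReal_ofReal (hΦ0 k)]

lemma le_iff_convexOn_Ppot_sub (hη : MemM η) (hχ : MemM χ) :
    η ≤ χ ↔ ConvexOn ℝ univ fun k => Ppot χ k - Ppot η k := by
  refine ⟨fun h => ?_, fun h => ?_⟩
  · have := hη.1
    have hsub : MemM (χ - η) := hχ.of_le Measure.sub_le
    convert hsub.convexOn_Ppot using 2 with k
    rw [sub_eq_iff_eq_add, ← hsub.Ppot_add hη, Measure.sub_add_cancel_of_le h]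
  · obtain ⟨θ, hθχ, hθη⟩ := hχ.exists_le_Ppot_eq hη.convexOn_Ppot h hη.tendsto_Ppot_atBot
    rwa [← (hχ.of_le hθχ).ext_of_Ppot hη hθη]

lemma abs_Ppot_sub_mul_le (hη : MemM η) (hk : 0 ≤ k) :
    |Ppot η k - η.real univ * k| ≤ ∫ x, |x| ∂η := by
  have := hη.1
  have hput (x : ℝ) : |max (k - x) 0 - k| ≤ |x| := by
    simpa [hk] using abs_max_sub_max_le_abs (k - x) k 0
  have hmul : η.real univ * k = ∫ _, k ∂η := by simp
  rw [hmul, Ppot, ← integral_sub (hη.integrable_put k) (integrable_const k)]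
  exact (abs_integral_le_integral_abs).trans (integral_mono
    ((hη.integrable_put k).sub (integrable_const k)).abs hη.2.abs hput)

lemma measureReal_univ_le_of_Ppot_le_add (hη : MemM η) (hχ : MemM χ) {C : ℝ}
    (h : ∀ k, 0 ≤ k → Ppot η k ≤ Ppot χ k + C) : η.real univ ≤ χ.real univ := by
  by_contra! hlt
  obtain ⟨k, hk, hk0⟩ := (((tendsto_id.const_mul_atTop (sub_pos.mpr hlt)).eventually_gt_atTop
    (C + ∫ x, |x| ∂η + ∫ x, |x| ∂χ)).and (eventually_ge_atTop 0)).exists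
  have hη_abs := (abs_le.mp (hη.abs_Ppot_sub_mul_le hk0)).1
  have hχ_abs := (abs_le.mp (hχ.abs_Ppot_sub_mul_le hk0)).2
  simp only [id_eq, sub_mul] at hk
  linarith [h k hk0]

end MemM

end Potential

section ConvexDecreasingOrders

variable {η χ : Measure ℝ} {f : ℝ → ℝ}

lemma exists_ofReal_eq_const_add_lPpot (hf0 : ∀ x, 0 ≤ f x) (hf : ConvexOn ℝ univ f)
    (hanti : Antitone f) :
    ∃ (c : ℝ≥0∞) (τ : Measure ℝ), SFinite τ ∧ ∀ x, ENNReal.ofReal (f x) = c + lPpot τ (-x) := by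
  have hbdd : BddBelow (range f) := ⟨0, forall_mem_range.mpr hf0⟩
  let Φ := fun x => f (-x) - ⨅ y, f y
  have hΦ : ConvexOn ℝ univ Φ :=
    (hf.comp_linearMap (-LinearMap.id)).sub (concaveOn_const _ convex_univ)
  have hlim : Tendsto Φ atBot (𝓝 0) := by
    simpa [Φ] using
      ((tendsto_atTop_ciInf hanti hbdd).comp tendsto_neg_atBot_atTop).sub_const (⨅ y, f y)
  obtain ⟨τ, hτ, hτΦ⟩ := exists_lPpot_eq hΦ hlim
  refine ⟨ENNReal.ofReal (⨅ y, f y), τ, hτ, fun x => ?_⟩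
  have hx : f x = (⨅ y, f y) + Φ (-x) := by simp [Φ]
  rw [hτΦ, hx, ENNReal.ofReal_add (le_ciInf hf0)]
  simpa [Φ] using ciInf_le hbdd x

lemma lintegral_lPpot_neg_swap (η τ : Measure ℝ) [SFinite η] [SFinite τ] :
    ∫⁻ x, lPpot τ (-x) ∂η = ∫⁻ y, lPpot η (-y) ∂τ := by
  have hmeas : Measurable fun p : ℝ × ℝ => ENNReal.ofReal (-p.1 - p.2) := by fun_prop
  simp_rw [lPpot]
  rw [lintegral_lintegral_swap hmeas.aemeasurable]
  simp_rw [neg_sub_comm]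

lemma lintegral_le_of_lPpot_le [SFinite η] [SFinite χ] (huniv : η univ ≤ χ univ)
    (hP : ∀ k, lPpot η k ≤ lPpot χ k) (hf0 : ∀ x, 0 ≤ f x) (hf : ConvexOn ℝ univ f)
    (hanti : Antitone f) :
    ∫⁻ x, ENNReal.ofReal (f x) ∂η ≤ ∫⁻ x, ENNReal.ofReal (f x) ∂χ := by
  obtain ⟨c, τ, hτ, hfτ⟩ := exists_ofReal_eq_const_add_lPpot hf0 hf hanti
  simp_rw [hfτ]
  rw [lintegral_add_left measurable_const, lintegral_add_left measurable_const, lintegral_const,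
    lintegral_const, lintegral_lPpot_neg_swap η τ, lintegral_lPpot_neg_swap χ τ]
  gcongr
  exact hP _

lemma lePCD_iff_Ppot_le (hη : MemM η) (hχ : MemM χ) :
    LePCD η χ ↔ ∀ k, Ppot η k ≤ Ppot χ k := by
  refine ⟨fun h k => h _ (fun _ => le_max_right _ _) (convexOn_put_strike k)
    (antitone_put_strike k) (hη.integrable_put k) (hχ.integrable_put k), fun h => ?_⟩
  intro f hf0 hf hanti hfη hfχ
  have := hη.1
  have := hχ.1
  have huniv : η univ ≤ χ univ := by
    rw [← ENNReal.toReal_le_toReal (measure_ne_top _ _) (measure_ne_top _ _)]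
    exact hη.measureReal_univ_le_of_Ppot_le_add hχ fun k _ => (h k).trans (add_zero _).ge
  have hlP (k : ℝ) : lPpot η k ≤ lPpot χ k := by
    rw [← hη.ofReal_Ppot, ← hχ.ofReal_Ppot]
    exact ENNReal.ofReal_le_ofReal (h k)
  rw [integral_eq_lintegral_of_nonneg_ae (ae_of_all _ hf0) hfη.aestronglyMeasurable,
    integral_eq_lintegral_of_nonneg_ae (ae_of_all _ hf0) hfχ.aestronglyMeasurable]
  exact ENNReal.toReal_mono ((hasFiniteIntegral_iff_ofReal (ae_of_all _ hf0)).mp hfχ.2).ne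
    (lintegral_le_of_lPpot_le huniv hlP hf0 hf hanti)

lemma tendsto_integral_max_neg_natCast {Ω : Type*} [MeasurableSpace Ω] {ρ : Measure Ω}
    [IsFiniteMeasure ρ] {f : Ω → ℝ} (hf : Integrable f ρ) :
    Tendsto (fun n : ℕ => ∫ x, max (f x) (-(n : ℝ)) ∂ρ) atTop (𝓝 (∫ x, f x ∂ρ)) := by
  refine tendsto_integral_of_dominated_convergence (fun x => |f x|)
    (fun n => (hf.sup (integrable_const _)).aestronglyMeasurable) hf.abs
    (fun n => ae_of_all _ fun x => ?_) (ae_of_all _ fun x => ?_)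
  · exact abs_le.mpr ⟨(neg_abs_le _).trans (le_max_left _ _), max_le (le_abs_self _)
      ((neg_nonpos.mpr n.cast_nonneg).trans (abs_nonneg _))⟩
  · refine tendsto_const_nhds.congr' ?_
    filter_upwards [tendsto_natCast_atTop_atTop.eventually_ge_atTop (-f x)] with n hn
    rw [max_eq_left (neg_le.mp hn)]

lemma LePCD.leCD [IsFiniteMeasure η] [IsFiniteMeasure χ] (h : LePCD η χ)
    (huniv : η.real univ = χ.real univ) : LeCD η χ := by
  intro f hf hanti hfη hfχ
  refine le_of_tendsto_of_tendsto' (tendsto_integral_max_neg_natCast hfη)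
    (tendsto_integral_max_neg_natCast hfχ) fun n => ?_
  have hintη : Integrable (fun x => max (f x) (-(n : ℝ))) η := hfη.sup (integrable_const _)
  have hintχ : Integrable (fun x => max (f x) (-(n : ℝ))) χ := hfχ.sup (integrable_const _)
  have hshift := h (fun x => max (f x) (-(n : ℝ)) + n)
    (fun x => by linarith [le_max_right (f x) (-(n : ℝ))])
    ((hf.sup (convexOn_const _ convex_univ)).add_const _)
    (fun x y hxy => add_le_add_left (max_le_max_right _ (hanti hxy)) _)
    (hintη.add (integrable_const _)) (hintχ.add (integrable_const _))
  rw [integral_add hintη (integrable_const _), integral_add hintχ (integrable_const _)] at hshift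
  simpa [huniv] using hshift

lemma LeCD.lePCD (h : LeCD η χ) : LePCD η χ :=
  fun f _ => h f

lemma LePCD.of_le {ξ : Measure ℝ} (h : LePCD η χ) (hη : MemM η) (hχ : MemM χ) (hle : ξ ≤ η) :
    LePCD ξ χ :=
  (lePCD_iff_Ppot_le (hη.of_le hle) hχ).mpr fun k =>
    (hη.Ppot_mono hle k).trans ((lePCD_iff_Ppot_le hη hχ).mp h k)

lemma LeCD.antisymm (h : LeCD η χ) (h' : LeCD χ η) (hη : MemM η) (hχ : MemM χ) : η = χ :=
  hη.ext_of_Ppot hχ fun k => ((lePCD_iff_Ppot_le hη hχ).mp h.lePCD k).antisymm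
    ((lePCD_iff_Ppot_le hχ hη).mp h'.lePCD k)

end ConvexDecreasingOrders

section Shadow

variable {ξ μ ν S S' : Measure ℝ}

-- `P_η` has slope `η(ℝ)` at `+∞`, and `P_ν - P_μ` has an affine minorant of slope `ν(ℝ) - μ(ℝ)`,
-- so its convex hull `P_ν - P_T` has that slope as well.
lemma measureReal_univ_eq_of_isConvexHullFn {T : Measure ℝ} (hμ : MemM μ) (hν : MemM ν)
    (hT : MemM T) (hμν : LePCD μ ν)
    (hhull : IsConvexHullFn (fun k => Ppot ν k - Ppot μ k) fun k => Ppot ν k - Ppot T k) :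
    μ.real univ = T.real univ := by
  have hμνP := (lePCD_iff_Ppot_le hμ hν).mp hμν
  have hmass : μ.real univ ≤ ν.real univ :=
    hμ.measureReal_univ_le_of_Ppot_le_add hν (C := 0) fun k _ => by linarith [hμνP k]
  refine (hμ.measureReal_univ_le_of_Ppot_le_add hT (C := 0) fun k _ => ?_).antisymm
    (hT.measureReal_univ_le_of_Ppot_le_add hμ
      (C := 2 * (∫ x, |x| ∂ν + ∫ x, |x| ∂μ)) fun k hk => ?_)
  · linarith [hhull.2.1 k]
  set C := ∫ x, |x| ∂ν + ∫ x, |x| ∂μ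
  have hC0 : 0 ≤ C := by positivity
  have hminorant : ∀ l, (ν.real univ - μ.real univ) * l + -C ≤ Ppot ν l - Ppot μ l := fun l => by
    rcases le_total 0 l with hl | hl
    · linarith [(abs_le.mp (hν.abs_Ppot_sub_mul_le hl)).1,
        (abs_le.mp (hμ.abs_Ppot_sub_mul_le hl)).2]
    · linarith [hμνP l, mul_nonpos_of_nonneg_of_nonpos (sub_nonneg.mpr hmass) hl]
  linarith [hhull.2.2 _ (convexOn_mul_add_const _ _) hminorant k,
    (abs_le.mp (hν.abs_Ppot_sub_mul_le hk)).2, (abs_le.mp (hμ.abs_Ppot_sub_mul_le hk)).1]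

lemma exists_leCD_isConvexHullFn (hμ : MemM μ) (hν : MemM ν) (hμν : LePCD μ ν) :
    ∃ T ≤ ν, LeCD μ T ∧
      IsConvexHullFn (fun k => Ppot ν k - Ppot μ k) fun k => Ppot ν k - Ppot T k := by
  have hμνP : ∀ k, 0 ≤ Ppot ν k - Ppot μ k := fun k =>
    sub_nonneg.mpr ((lePCD_iff_Ppot_le hμ hν).mp hμν k)
  have hzero : ConvexOn ℝ univ fun _ : ℝ => (0 : ℝ) := convexOn_const 0 convex_univ
  obtain ⟨h, hh⟩ := IsConvexHullFn.exists_of_convexOn_le hzero hμνP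
  have hh0 : ∀ k, 0 ≤ h k := hh.2.2 _ hzero hμνP
  have hconv : ConvexOn ℝ univ fun k => Ppot ν k - h k := by
    refine hh.convexOn_sub (hν.continuous_Ppot.sub hμ.continuous_Ppot) hμ.convexOn_Ppot ?_
    simpa only [Pi.sub_apply, sub_add_cancel] using IsConvexHullFn.self hν.convexOn_Ppot
  have hlim : Tendsto (fun k => Ppot ν k - h k) atBot (𝓝 0) :=
    tendsto_of_tendsto_of_tendsto_of_le_of_le hμ.tendsto_Ppot_atBot hν.tendsto_Ppot_atBot
      (fun k => le_sub_comm.mp (hh.2.1 k)) fun k => sub_le_self _ (hh0 k)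
  obtain ⟨T, hTν, hPT⟩ := hν.exists_le_Ppot_eq hconv (by simpa using hh.1) hlim
  have hT := hν.of_le hTν
  have := hμ.1
  have := hT.1
  have hhull : IsConvexHullFn (fun k => Ppot ν k - Ppot μ k) fun k => Ppot ν k - Ppot T k := by
    simpa [hPT] using hh
  refine ⟨T, hTν, LePCD.leCD ((lePCD_iff_Ppot_le hμ hT).mpr fun k => ?_)
    (measureReal_univ_eq_of_isConvexHullFn hμ hν hT hμν hhull), hhull⟩
  linarith [hhull.2.1 k]

namespace IsShadow

lemma le (hS : IsShadow μ ν S) : S ≤ ν := Measure.le_iff.mpr hS.2.2.1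

lemma leCD_of_le {η : Measure ℝ} (hS : IsShadow μ ν S) (hη : MemM η) (hμη : LeCD μ η)
    (hle : η ≤ ν) : LeCD S η :=
  hS.2.2.2 η hη hμη (Measure.le_iff.mp hle)

lemma unique (hS : IsShadow μ ν S) (hS' : IsShadow μ ν S') : S = S' :=
  (hS.leCD_of_le hS'.1 hS'.2.1 hS'.le).antisymm (hS'.leCD_of_le hS.1 hS.2.1 hS.le) hS.1 hS'.1

lemma of_le {ρ : Measure ℝ} (hS : IsShadow μ ν S) (hSρ : S ≤ ρ) (hρν : ρ ≤ ν) :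
    IsShadow μ ρ S :=
  ⟨hS.1, hS.2.1, Measure.le_iff.mp hSρ,
    fun _ hη hμη hηρ => hS.leCD_of_le hη hμη ((Measure.le_iff.mpr hηρ).trans hρν)⟩

lemma isConvexHullFn (hμ : MemM μ) (hν : MemM ν) (hS : IsShadow μ ν S) :
    IsConvexHullFn (fun k => Ppot ν k - Ppot μ k) fun k => Ppot ν k - Ppot S k := by
  have hμS : LePCD μ S := hS.2.1.lePCD
  have hPμS := (lePCD_iff_Ppot_le hμ hS.1).mp hμS
  have hμν : LePCD μ ν := (lePCD_iff_Ppot_le hμ hν).mpr fun k =>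
    (hPμS k).trans (hν.Ppot_mono hS.le k)
  obtain ⟨T, hTν, hμT, hhull⟩ := exists_leCD_isConvexHullFn hμ hν hμν
  have hT := hν.of_le hTν
  have hPST := (lePCD_iff_Ppot_le hS.1 hT).mp (hS.leCD_of_le hT hμT hTν).lePCD
  refine ⟨(hS.1.le_iff_convexOn_Ppot_sub hν).mp hS.le, fun k => sub_le_sub_left (hPμS k) _,
    fun g hg hgF k => ?_⟩
  exact (hhull.2.2 g hg hgF k).trans (sub_le_sub_left (hPST k) _)

lemma le_of_le (hμ : MemM μ) (hν : MemM ν) (hle : ξ ≤ μ) (hS : IsShadow μ ν S)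
    (hS' : IsShadow ξ ν S') : S' ≤ S := by
  have hξ := hμ.of_le hle
  have hhull' : IsConvexHullFn (fun k => (Ppot ν k - Ppot μ k) + (Ppot μ k - Ppot ξ k))
      fun k => Ppot ν k - Ppot S' k := by
    simpa only [sub_add_sub_cancel] using hS'.isConvexHullFn hξ hν
  have hconv := (hS.isConvexHullFn hμ hν).convexOn_sub
    (hν.continuous_Ppot.sub hμ.continuous_Ppot) ((hξ.le_iff_convexOn_Ppot_sub hμ).mp hle) hhull'
  refine (hS'.1.le_iff_convexOn_Ppot_sub hS.1).mpr ?_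
  simpa only [sub_sub_sub_cancel_left] using hconv

end IsShadow

end Shadow

/-- Lemma 3.12: structural property of the shadow, `S^{S^ν(μ)}(ξ) = S^ν(ξ)` for
`ξ ≤ μ ≤_pcd ν`; in particular `S^ν(ξ) ≤ S^ν(μ)`. -/
theorem shadow_of_smaller_measure
    (ξ μ ν : MeasureTheory.Measure ℝ)
    (hξ : MemM ξ) (hμ : MemM μ) (hν : MemM ν)
    (hle : ∀ A : Set ℝ, MeasurableSet A → ξ A ≤ μ A)
    (hpcd : LePCD μ ν)
    (Sμ : MeasureTheory.Measure ℝ) (hSμ : IsShadow μ ν Sμ) :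
    LePCD ξ ν ∧ LePCD ξ Sμ ∧
    (∀ S' S'' : MeasureTheory.Measure ℝ,
      IsShadow ξ Sμ S' → IsShadow ξ ν S'' → S' = S'') ∧
    (∀ S'' : MeasureTheory.Measure ℝ, IsShadow ξ ν S'' →
      ∀ A : Set ℝ, MeasurableSet A → S'' A ≤ Sμ A) := by
  have hle' : ξ ≤ μ := Measure.le_iff.mpr hle
  have hle_shadow : ∀ S'', IsShadow ξ ν S'' → S'' ≤ Sμ := fun _ hS'' =>
    hSμ.le_of_le hμ hν hle' hS''
  refine ⟨hpcd.of_le hμ hν hle', hSμ.2.1.lePCD.of_le hμ hSμ.1 hle', fun S' S'' hS' hS'' => ?_,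
    fun S'' hS'' => Measure.le_iff.mp (hle_shadow S'' hS'')⟩
  exact hS'.unique (hS''.of_le (hle_shadow S'' hS'') hSμ.le)
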